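/- If there exists an s-extremal singly even self-dual [n, n/2, d] code with d ≡ 0 (mod 4), then n ≤ 6d − 4. In particular, if there exists an s-extremal singly even self-dual code of length n with minimum weight 8, then n ≤ 44. -/

import Mathlib

open Finset

/-- Hamming weight of a binary vector. -/
def wt {n : ℕ} (x : Fin n → ZMod 2) : ℕ := hammingNorm x

/-- The dual of a set of binary vectors with respect to the standard inner product. -/
def dualSet {n : ℕ} (C : Set (Fin n → ZMod 2)) : Set (Fin n → ZMod 2) :=
  {x | ∀ y ∈ C, ∑ i, x i * y i = 0}

/-- A binary linear code is self-dual if it equals its dual code. -/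
def IsSelfDual {n : ℕ} (C : Submodule (ZMod 2) (Fin n → ZMod 2)) : Prop :=
  (C : Set (Fin n → ZMod 2)) = dualSet (C : Set (Fin n → ZMod 2))

/-- A self-dual code is singly even if some codeword has weight not divisible by 4. -/
def IsSinglyEvenSelfDual {n : ℕ} (C : Submodule (ZMod 2) (Fin n → ZMod 2)) : Prop :=
  IsSelfDual C ∧ ∃ x ∈ C, ¬ (4 ∣ wt x)

/-- The doubly even subcode `C₀` of `C` (as a set): codewords of weight ≡ 0 (mod 4). -/
def evenSub {n : ℕ} (C : Submodule (ZMod 2) (Fin n → ZMod 2)) : Set (Fin n → ZMod 2) :=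
  {x | x ∈ C ∧ 4 ∣ wt x}

/-- The shadow `S = C₀^⊥ \ C` of a singly even self-dual code. -/
def shadow {n : ℕ} (C : Submodule (ZMod 2) (Fin n → ZMod 2)) : Set (Fin n → ZMod 2) :=
  dualSet (evenSub C) \ (C : Set (Fin n → ZMod 2))

/-- The minimum (nonzero) weight of a set of vectors. -/
noncomputable def minWtSet {n : ℕ} (S : Set (Fin n → ZMod 2)) : ℕ :=
  sInf {w | ∃ x ∈ S, x ≠ 0 ∧ wt x = w}

/-- The minimum weight of a code. -/
noncomputable def minWt {n : ℕ} (C : Submodule (ZMod 2) (Fin n → ZMod 2)) : ℕ :=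
  minWtSet (C : Set (Fin n → ZMod 2))

/-- A singly even self-dual code of length `n` is s-extremal if
`d(S) = n/2 + 4 - 2 d(C)`. -/
def IsSExtremal {n : ℕ} (C : Submodule (ZMod 2) (Fin n → ZMod 2)) : Prop :=
  IsSinglyEvenSelfDual C ∧
    (minWtSet (shadow C) : ℤ) = ((n / 2 : ℕ) : ℤ) + 4 - 2 * (minWt C : ℤ)

/-- Two codes are equivalent if one is obtained from the other by permuting coordinates. -/
def CodeEquiv {n : ℕ} (C D : Submodule (ZMod 2) (Fin n → ZMod 2)) : Prop :=
  ∃ σ : Equiv.Perm (Fin n),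
    Submodule.map (LinearMap.funLeft (ZMod 2) (ZMod 2) σ) C = D

/-- The neighbor `C₀ ∪ (t + C₀)` of `C` obtained from a shadow vector `t`:
the span of the doubly even subcode together with `t`. -/
def neighborCode {n : ℕ} (C : Submodule (ZMod 2) (Fin n → ZMod 2))
    (t : Fin n → ZMod 2) : Submodule (ZMod 2) (Fin n → ZMod 2) :=
  Submodule.span (ZMod 2) (evenSub C ∪ {t})

/-!
Write `d = 2 (k + 1)` and `z = y ^ 2`. By Gleason's theorem the weight enumerator of `C` is a
polynomial `P(z) = ∑ c_j (1 + z) ^ (n / 2 - 4 j) (z (1 - z) ^ 2) ^ j`. The enumerator of the shadow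
is a transform of `P`, so `P` is divisible by `(1 + z) ^ d(S)`; as `d(S) = n / 2 - 4 k`, only the
terms with `j ≤ k` occur. On the other hand `P = 1 + A_d z ^ (k + 1) + …`, and expanding
`(1 + z) ^ (-n / 2)` in powers of `z (1 - z) ^ 2 / (1 + z) ^ 4` by Lagrange inversion gives
`(k + 1) A_d = (n / 2) [z ^ k] (1 + z) ^ (4 k + 3 - n / 2) (1 - z) ^ (-2 k - 2)`.
If `n > 6 d - 4`, the series on the right is a product of powers of `1 / (1 + z)` and
`1 / (1 - z ^ 2)`, so its coefficients alternate in sign. When `4 ∣ d`, the exponent `k` is odd, so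
`A_d ≤ 0`, contradicting the existence of a codeword of weight `d`.
-/

section WeightEnumerator

open Matrix

variable {R : Type*} [CommRing R] {n : ℕ}

/-- The nontrivial character `a ↦ (-1) ^ a` of `ZMod 2`, with values in `R`. -/
def signChar (R : Type*) [CommRing R] : AddChar (ZMod 2) R :=
  AddChar.zmodChar 2 (ζ := -1) (by norm_num)

lemma signChar_one : signChar R 1 = -1 := by
  simp [signChar, AddChar.zmodChar_apply, ZMod.val_one]

lemma signChar_eq_one_iff [CharZero R] {a : ZMod 2} : signChar R a = 1 ↔ a = 0 := by
  obtain rfl | rfl : a = 0 ∨ a = 1 := by revert a; decide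
  · simp
  · simp [signChar_one, neg_eq_iff_add_eq_zero, one_add_one_eq_two]

/-- The character `y ↦ (-1) ^ (x · y)` of the space of binary vectors. -/
def dotChar (R : Type*) [CommRing R] (x : Fin n → ZMod 2) : AddChar (Fin n → ZMod 2) R where
  toFun y := signChar R (x ⬝ᵥ y)
  map_zero_eq_one' := by simp
  map_add_eq_mul' y z := by rw [dotProduct_add, AddChar.map_add_eq_mul]

lemma dotChar_eq_prod (x y : Fin n → ZMod 2) :
    dotChar R x y = ∏ i, signChar R (x i * y i) :=
  map_sum (signChar R).toAddMonoidHom _ _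

lemma dotChar_eq_one_iff [CharZero R] {x y : Fin n → ZMod 2} :
    dotChar R x y = 1 ↔ x ⬝ᵥ y = 0 :=
  signChar_eq_one_iff

/-- The monomial contributed by the vector `v` to the homogeneous weight enumerator of a code. -/
def weightMonomial (x y : R) (v : Fin n → ZMod 2) : R := x ^ (n - wt v) * y ^ wt v

lemma wt_le (v : Fin n → ZMod 2) : wt v ≤ n :=
  hammingNorm_le_card_fintype.trans_eq (Fintype.card_fin n)

lemma weightMonomial_eq_prod (x y : R) (v : Fin n → ZMod 2) :
    weightMonomial x y v = ∏ i, if v i = 0 then x else y := by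
  have card_zeros : #{i | v i = 0} = n - wt v := by
    have := card_filter_add_card_filter_not (s := univ) (fun i => v i = 0)
    simp only [card_univ, Fintype.card_fin] at this
    exact Nat.eq_sub_of_add_eq this
  rw [prod_ite, prod_const, prod_const, card_zeros]
  rfl

lemma weightMonomial_eq_pow_mul {K : Type*} [Field K] {x : K} (hx : x ≠ 0) (y : K)
    (v : Fin n → ZMod 2) : weightMonomial x y v = x ^ n * (y / x) ^ wt v := by
  rw [weightMonomial, div_pow, pow_sub₀ _ hx (wt_le v)]
  field

/-- The Fourier transform of a weight monomial factors over the coordinates. -/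
lemma weightMonomial_add_sub (x y : R) (c : Fin n → ZMod 2) :
    weightMonomial (x + y) (x - y) c = ∑ v, dotChar R v c * weightMonomial x y v := by
  have coord (a : ZMod 2) : (if a = 0 then x + y else x - y) =
      ∑ b : ZMod 2, signChar R (b * a) * if b = 0 then x else y := by
    rw [show (univ : Finset (ZMod 2)) = {0, 1} from rfl]
    obtain rfl | rfl : a = 0 ∨ a = 1 := by revert a; decide
    all_goals simp [signChar_one, sub_eq_add_neg]
  simp only [weightMonomial_eq_prod, coord, dotChar_eq_prod, ← prod_mul_distrib,
    Fintype.prod_sum]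

/-- For a character `χ` of the code `C`, the set of vectors `v` with `(-1) ^ (v · c) = χ(c)` for
all `c ∈ C`. It is the dual code for trivial `χ` and a coset of the dual code in general. -/
def twistedDual {C : Submodule (ZMod 2) (Fin n → ZMod 2)} (χ : AddChar C R) :
    Set (Fin n → ZMod 2) :=
  {v | ∀ c : C, χ c * dotChar R v c = 1}

open scoped Classical in
theorem macWilliams_twisted [IsDomain R] {C : Submodule (ZMod 2) (Fin n → ZMod 2)}
    (χ : AddChar C R) (x y : R) :
    ∑ c : C, χ c * weightMonomial (x + y) (x - y) (c : Fin n → ZMod 2) =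
      Nat.card C * ∑ v with v ∈ twistedDual χ, weightMonomial x y v := by
  have orthogonality (v : Fin n → ZMod 2) :
      ∑ c : C, χ c * dotChar R v c = if v ∈ twistedDual χ then (Nat.card C : R) else 0 := by
    let ψ : AddChar C R := χ * (dotChar R v).compAddMonoidHom C.subtype.toAddMonoidHom
    have mem_iff : v ∈ twistedDual χ ↔ ψ = 0 := (AddChar.eq_zero_iff (ψ := ψ)).symm
    rw [Nat.card_eq_fintype_card, if_congr mem_iff rfl rfl, ← AddChar.sum_eq_ite ψ]
    rfl
  calc ∑ c : C, χ c * weightMonomial (x + y) (x - y) (c : Fin n → ZMod 2)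
      = ∑ v : Fin n → ZMod 2, (∑ c : C, χ c * dotChar R v c) * weightMonomial x y v := by
        simp_rw [weightMonomial_add_sub, mul_sum, sum_mul, mul_assoc]
        exact sum_comm
    _ = Nat.card C * ∑ v with v ∈ twistedDual χ, weightMonomial x y v := by
        simp only [orthogonality, ite_mul, zero_mul, ← sum_filter, mul_sum]

lemma twistedDual_one [CharZero R] (C : Submodule (ZMod 2) (Fin n → ZMod 2)) :
    twistedDual (1 : AddChar C R) = dualSet C := by
  ext v
  simp [twistedDual, dotChar_eq_one_iff, dualSet, dotProduct]

open scoped Classical in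
theorem macWilliams [IsDomain R] [CharZero R] (C : Submodule (ZMod 2) (Fin n → ZMod 2))
    (x y : R) :
    ∑ c : C, weightMonomial (x + y) (x - y) (c : Fin n → ZMod 2) =
      Nat.card C * ∑ v with v ∈ dualSet (C : Set (Fin n → ZMod 2)), weightMonomial x y v := by
  simpa [twistedDual_one] using macWilliams_twisted (1 : AddChar C R) x y

theorem card_mul_card_dualSet (C : Submodule (ZMod 2) (Fin n → ZMod 2)) :
    Nat.card C * Nat.card (dualSet (C : Set (Fin n → ZMod 2))) = 2 ^ n := by
  classical
  have key := macWilliams C (1 : ℤ) 1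
  have only_zero : ∑ c : C, weightMonomial (1 + 1 : ℤ) (1 - 1) (c : Fin n → ZMod 2) = 2 ^ n := by
    rw [Fintype.sum_eq_single 0]
    · simp [weightMonomial, wt]
    · intro c hc
      have : wt (c : Fin n → ZMod 2) ≠ 0 := by simpa [wt] using hc
      simp [weightMonomial, this]
  rw [only_zero] at key
  simp only [weightMonomial, one_pow, mul_one, sum_const, nsmul_one] at key
  rw [Nat.card_eq_fintype_card (α := dualSet _), Fintype.card_subtype]
  exact_mod_cast key.symm

end WeightEnumerator

section SelfDual

open Matrix

variable {n : ℕ} {C : Submodule (ZMod 2) (Fin n → ZMod 2)}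

theorem IsSelfDual.two_mul_finrank (hC : IsSelfDual C) : 2 * Module.finrank (ZMod 2) C = n := by
  have h := card_mul_card_dualSet C
  rw [← hC, SetLike.coe_sort_coe, Module.natCard_eq_pow_finrank (K := ZMod 2), Nat.card_zmod,
    ← pow_add, ← two_mul] at h
  exact Nat.pow_right_injective le_rfl h

/-- The number of common ones of `x` and `y`, which lifts `x · y` to `ℕ`. -/
def overlap (x y : Fin n → ZMod 2) : ℕ := #{i | x i ≠ 0 ∧ y i ≠ 0}

lemma wt_add_add_two_mul_overlap (x y : Fin n → ZMod 2) :
    wt (x + y) + 2 * overlap x y = wt x + wt y := by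
  have coord (a b : ZMod 2) : (if a + b ≠ 0 then 1 else 0) + 2 * (if a ≠ 0 ∧ b ≠ 0 then 1 else 0) =
      (if a ≠ 0 then 1 else 0) + if b ≠ 0 then 1 else 0 := by
    revert a b; decide
  simp only [wt, hammingNorm, overlap, card_filter, mul_sum, ← sum_add_distrib, Pi.add_apply, coord]

lemma natCast_overlap (x y : Fin n → ZMod 2) : (overlap x y : ZMod 2) = x ⬝ᵥ y := by
  have coord (a b : ZMod 2) : ((if a ≠ 0 ∧ b ≠ 0 then 1 else 0 : ℕ) : ZMod 2) = a * b := by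
    revert a b; decide
  simp only [overlap, card_filter, Nat.cast_sum, coord, dotProduct]

lemma even_overlap (hC : (C : Set (Fin n → ZMod 2)) ⊆ dualSet C) {x y : Fin n → ZMod 2}
    (hx : x ∈ C) (hy : y ∈ C) : Even (overlap x y) := by
  rw [even_iff_two_dvd, ← ZMod.natCast_eq_zero_iff, natCast_overlap]
  exact hC hx y hy

lemma even_wt (hC : (C : Set (Fin n → ZMod 2)) ⊆ dualSet C) {x : Fin n → ZMod 2}
    (hx : x ∈ C) : Even (wt x) := by
  simpa [overlap, wt, hammingNorm] using even_overlap hC hx hx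

/-- The character `c ↦ (-1) ^ (wt c / 2)` of a self-orthogonal code. It is trivial exactly on the
doubly even subcode. -/
def halfWeightChar (hC : (C : Set (Fin n → ZMod 2)) ⊆ dualSet C) : AddChar C ℝ where
  toFun c := (-1) ^ (wt (c : Fin n → ZMod 2) / 2)
  map_zero_eq_one' := by simp [wt]
  map_add_eq_mul' x y := by
    have h := wt_add_add_two_mul_overlap (x : Fin n → ZMod 2) y
    obtain ⟨o, ho⟩ := even_overlap hC x.2 y.2
    obtain ⟨a, ha⟩ := even_wt hC x.2
    obtain ⟨b, hb⟩ := even_wt hC y.2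
    have half_wt_add : wt (x + y : Fin n → ZMod 2) / 2 + 2 * o =
        wt (x : Fin n → ZMod 2) / 2 + wt (y : Fin n → ZMod 2) / 2 := by omega
    rw [← pow_add, ← half_wt_add, pow_add, pow_mul]
    simp

lemma halfWeightChar_apply (hC : (C : Set (Fin n → ZMod 2)) ⊆ dualSet C) (c : C) :
    halfWeightChar hC c = (-1) ^ (wt (c : Fin n → ZMod 2) / 2) :=
  rfl

lemma halfWeightChar_eq_one_iff (hC : (C : Set (Fin n → ZMod 2)) ⊆ dualSet C) (c : C) :
    halfWeightChar hC c = 1 ↔ 4 ∣ wt (c : Fin n → ZMod 2) := by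
  obtain ⟨a, ha⟩ := even_wt hC c.2
  rw [halfWeightChar_apply, neg_one_pow_eq_one_iff_even (by norm_num), Nat.even_iff]
  omega

lemma twistedDual_halfWeightChar_subset_shadow (hC : IsSinglyEvenSelfDual C) :
    twistedDual (halfWeightChar hC.1.subset) ⊆ shadow C := by
  intro v hv
  refine ⟨fun y ⟨hyC, hy4⟩ => ?_, fun hvC => ?_⟩
  · have h := hv ⟨y, hyC⟩
    rwa [(halfWeightChar_eq_one_iff _ _).2 hy4, one_mul, dotChar_eq_one_iff] at h
  · obtain ⟨x, hxC, hx4⟩ := hC.2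
    have h := hv ⟨x, hxC⟩
    rw [dotChar_eq_one_iff.2 (hC.1.subset hvC x hxC), mul_one, halfWeightChar_eq_one_iff] at h
    exact hx4 h

end SelfDual

section Gleason

open Polynomial Filter Topology Asymptotics

lemma X_sub_C_pow_dvd_of_isBigO {𝕜 : Type*} [NontriviallyNormedField 𝕜] {a : 𝕜} {p : 𝕜[X]}
    {s : ℕ} (hp : (fun z => p.eval z) =O[𝓝[≠] a] fun z => (z - a) ^ s) : (X - C a) ^ s ∣ p := by
  induction s generalizing p with
  | zero => simp
  | succ s ih =>
    have root : p.IsRoot a := by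
      have tendsto_zero : Tendsto (fun z => (z - a) ^ (s + 1)) (𝓝[≠] a) (𝓝 0) := by
        have : Tendsto (fun z => (z - a) ^ (s + 1)) (𝓝 a) (𝓝 ((a - a) ^ (s + 1))) :=
          Continuous.tendsto (by fun_prop) a
        simpa using this.mono_left nhdsWithin_le_nhds
      exact tendsto_nhds_unique ((p.continuous.tendsto a).mono_left
        nhdsWithin_le_nhds) (hp.trans_tendsto tendsto_zero)
    obtain ⟨q, rfl⟩ := dvd_iff_isRoot.2 root
    rw [pow_succ']
    refine mul_dvd_mul_left _ (ih ?_)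
    refine (hp.mul (isBigO_refl (fun z => (z - a)⁻¹) _)).congr' ?_ ?_ <;>
      filter_upwards [self_mem_nhdsWithin] with z hz <;>
      replace hz := sub_ne_zero.2 hz
    · simp only [eval_mul, eval_sub, eval_X, eval_C]
      field
    · rw [pow_succ, mul_inv_cancel_right₀ hz]

/-- The polynomials `Q` of formal degree `N` invariant under the MacWilliams transform of length
`2N`, written in the square `z = y²` of the weight variable: `y ↦ (1 - y) / (1 + y)` becomes an
involution of the values `y²`. -/
def macWilliamsInvariants (N : ℕ) : Submodule ℝ ℝ[X] where
  carrier := {Q | ∀ t : ℝ, 1 + t ≠ 0 →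
    (1 + t) ^ (2 * N) * Q.eval (((1 - t) / (1 + t)) ^ 2) = 2 ^ N * Q.eval (t ^ 2)}
  zero_mem' := by simp
  add_mem' hP hQ t ht := by
    rw [eval_add, eval_add, mul_add, mul_add, hP t ht, hQ t ht]
  smul_mem' a Q hQ t ht := by
    rw [eval_smul, eval_smul, mul_smul_comm, mul_smul_comm, hQ t ht]

variable {M N : ℕ} {P Q : ℝ[X]}

namespace macWilliamsInvariants

lemma mul_mem (hP : P ∈ macWilliamsInvariants M) (hQ : Q ∈ macWilliamsInvariants N) :
    P * Q ∈ macWilliamsInvariants (M + N) := fun t ht => by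
  rw [eval_mul, eval_mul]
  linear_combination 2 ^ M * P.eval (t ^ 2) * hQ t ht +
    (1 + t) ^ (2 * N) * Q.eval (((1 - t) / (1 + t)) ^ 2) * hP t ht

lemma one_mem : (1 : ℝ[X]) ∈ macWilliamsInvariants 0 := fun t _ => by simp

lemma pow_mem (hP : P ∈ macWilliamsInvariants M) (k : ℕ) :
    P ^ k ∈ macWilliamsInvariants (k * M) := by
  induction k with
  | zero => simpa using one_mem
  | succ k ih => simpa [pow_succ, add_mul] using mul_mem ih hP

lemma one_add_X_mem : (1 + X : ℝ[X]) ∈ macWilliamsInvariants 1 := fun t ht => by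
  simp only [eval_add, eval_one, eval_X]
  field_simp
  ring

lemma X_mul_one_sub_X_sq_mem : (X * (1 - X) ^ 2 : ℝ[X]) ∈ macWilliamsInvariants 4 := fun t ht => by
  simp only [eval_mul, eval_X, eval_pow, eval_sub, eval_one]
  field_simp
  ring

lemma one_add_X_pow_mem (N : ℕ) : ((1 + X) ^ N : ℝ[X]) ∈ macWilliamsInvariants N := by
  simpa using pow_mem one_add_X_mem N

lemma continuousAt_eval_transform (Q : ℝ[X]) {t : ℝ} (ht : 1 + t ≠ 0) :
    ContinuousAt (fun t : ℝ => Q.eval (((1 - t) / (1 + t)) ^ 2)) t :=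
  Q.continuous.continuousAt.comp (by fun_prop (disch := exact ht))

/-- Where `P (t ^ 2) ≠ 0` one can divide by it, and continuity covers the remaining `t`. -/
lemma of_mul_mem_left (hP0 : P ≠ 0) (hP : P ∈ macWilliamsInvariants M)
    (hPQ : P * Q ∈ macWilliamsInvariants (M + N)) : Q ∈ macWilliamsInvariants N := fun t ht => by
  have ne_zero : ∀ᶠ s in 𝓝[≠] t, P.eval (s ^ 2) ≠ 0 := by
    have := finite_setOfPred_isRoot ((expand_ne_zero two_pos).2 hP0)
    filter_upwards [nhdsNE_le_cofinite t this.compl_mem_cofinite] with s hs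
    simpa [IsRoot, expand_eval] using hs
  have one_add_ne_zero : ∀ᶠ s in 𝓝[≠] t, 1 + s ≠ 0 :=
    nhdsWithin_le_nhds ((by fun_prop : ContinuousAt (fun s : ℝ => 1 + s) t).eventually_ne ht)
  have lhs_tendsto : ContinuousAt
      (fun s : ℝ => (1 + s) ^ (2 * N) * Q.eval (((1 - s) / (1 + s)) ^ 2)) t :=
    ContinuousAt.mul (by fun_prop) (continuousAt_eval_transform Q ht)
  have rhs_tendsto : ContinuousAt (fun s : ℝ => 2 ^ N * Q.eval (s ^ 2)) t := by fun_prop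
  refine tendsto_nhds_unique_of_eventuallyEq (l := 𝓝[≠] t)
    (lhs_tendsto.tendsto.mono_left nhdsWithin_le_nhds)
    (rhs_tendsto.tendsto.mono_left nhdsWithin_le_nhds) ?_
  filter_upwards [ne_zero, one_add_ne_zero] with s hs hs'
  have hPQs := hPQ s hs'
  rw [eval_mul, eval_mul] at hPQs
  refine mul_left_cancel₀ (mul_ne_zero (pow_ne_zero M two_ne_zero) hs) ?_
  linear_combination hPQs -
    (1 + s) ^ (2 * N) * Q.eval (((1 - s) / (1 + s)) ^ 2) * hP s hs'

lemma eval_one (hQ : Q ∈ macWilliamsInvariants N) : Q.eval 1 = 2 ^ N * Q.eval 0 := by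
  have at_one : 2 ^ (2 * N) * Q.eval 0 = 2 ^ N * Q.eval 1 := by
    simpa only [sub_self, zero_div, one_add_one_eq_two, one_pow, ne_eq, two_ne_zero,
      not_false_eq_true, zero_pow] using hQ 1 (by norm_num)
  refine mul_left_cancel₀ (pow_ne_zero N two_ne_zero) (at_one.symm.trans ?_)
  rw [two_mul, pow_add, mul_assoc]

/-- Invariance carries the zero at `z = 0` to a zero at infinity. -/
lemma degree_lt (hQ : Q ∈ macWilliamsInvariants N) (hQ0 : Q.eval 0 = 0) : Q.degree < N := by
  rw [← degree_X_pow (R := ℝ), ← div_tendsto_atTop_zero_iff_degree_lt _ _ (pow_ne_zero N X_ne_zero)]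
  let g : ℝ → ℝ := fun w => (1 + w) ^ (2 * N) / 2 ^ N * Q.eval (((1 - w) / (1 + w)) ^ 2)
  have g_tendsto : Tendsto g (𝓝 0) (𝓝 0) := by
    have : ContinuousAt g 0 :=
      ContinuousAt.mul (by fun_prop) (continuousAt_eval_transform Q (by norm_num))
    simpa [ContinuousAt, g, eval_one hQ, hQ0] using this
  have inv_sqrt_tendsto : Tendsto (fun x => (√x)⁻¹) atTop (𝓝 0) :=
    tendsto_inv_atTop_zero.comp Real.tendsto_sqrt_atTop
  refine (g_tendsto.comp inv_sqrt_tendsto).congr' ?_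
  filter_upwards [eventually_gt_atTop 0] with x hx
  obtain ⟨t, ht, rfl⟩ : ∃ t, 0 < t ∧ x = t ^ 2 :=
    ⟨√x, Real.sqrt_pos.2 hx, (Real.sq_sqrt hx.le).symm⟩
  have swap : ((1 - t⁻¹) / (1 + t⁻¹)) ^ 2 = ((1 - t) / (1 + t)) ^ 2 := by
    field_simp
    ring
  have scale : (1 + t⁻¹) ^ (2 * N) = (1 + t) ^ (2 * N) / (t ^ 2) ^ N := by
    rw [← pow_mul, ← div_pow]
    congr 1
    field
  have hQt := hQ t (by positivity)
  simp only [Function.comp_apply, Real.sqrt_sq ht.le, g, swap, scale, eval_pow, eval_X]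
  rw [div_div, div_mul_eq_mul_div, hQt]
  field_simp

/-- A zero at `z = 0` is a zero in `t` of order two at `t = 1` on the transformed side. -/
lemma one_sub_X_sq_dvd (hQ : Q ∈ macWilliamsInvariants N) (hQ0 : X ∣ Q) : (1 - X) ^ 2 ∣ Q := by
  obtain ⟨R, rfl⟩ := hQ0
  let g : ℝ → ℝ := fun t => (1 + t) ^ (2 * N) / 2 ^ N / (1 + t) ^ 4 *
    R.eval (((1 - t) / (1 + t)) ^ 2)
  have g_sqrt_tendsto : Tendsto (fun z => g √z) (𝓝[≠] 1) (𝓝 (g 1)) := by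
    have hg : ContinuousAt g √1 := by
      refine ContinuousAt.mul ?_ (continuousAt_eval_transform R (by norm_num))
      fun_prop (disch := norm_num)
    simpa [Function.comp_def] using
      (hg.comp Real.continuous_sqrt.continuousAt).tendsto.mono_left nhdsWithin_le_nhds
  have isBigO : (fun z => (X * R).eval z) =O[𝓝[≠] 1] fun z => (z - 1) ^ 2 := by
    refine ((isBigO_refl (fun z : ℝ => (z - 1) ^ 2) _).mul (g_sqrt_tendsto.isBigO_one ℝ)).congr'
      ?_ (by simp)
    filter_upwards [nhdsWithin_le_nhds (eventually_gt_nhds one_pos)] with z hz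
    obtain ⟨t, ht, rfl⟩ : ∃ t, 0 < t ∧ z = t ^ 2 :=
      ⟨√z, Real.sqrt_pos.2 hz, (Real.sq_sqrt hz.le).symm⟩
    have hQt := hQ t (by positivity)
    rw [← mul_right_inj' (pow_ne_zero N (two_ne_zero (α := ℝ))), ← hQt]
    simp only [Real.sqrt_sq ht.le, g, eval_mul, eval_X]
    field_simp
    ring
  have := X_sub_C_pow_dvd_of_isBigO isBigO
  rwa [C_1, ← neg_sub, neg_sq] at this

lemma X_mul_one_sub_X_sq_dvd (hQ : Q ∈ macWilliamsInvariants N) (hQ0 : Q.eval 0 = 0) :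
    X * (1 - X) ^ 2 ∣ Q := by
  have X_dvd : X ∣ Q := by rwa [X_dvd_iff, coeff_zero_eq_eval_zero]
  have coprime : IsCoprime (X : ℝ[X]) ((1 - X) ^ 2) := IsCoprime.pow_right ⟨1, 1, by ring⟩
  exact coprime.mul_dvd X_dvd (one_sub_X_sq_dvd hQ X_dvd)

lemma sub_eval_zero_smul_mem (hQ : Q ∈ macWilliamsInvariants N) :
    Q - Q.eval 0 • (1 + X) ^ N ∈ macWilliamsInvariants N :=
  Submodule.sub_mem _ hQ (Submodule.smul_mem _ _ (one_add_X_pow_mem N))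

lemma eq_smul_of_lt_four (hN : N < 4) (hQ : Q ∈ macWilliamsInvariants N) :
    Q = Q.eval 0 • (1 + X) ^ N := by
  have eval_zero : (Q - Q.eval 0 • (1 + X) ^ N).eval 0 = 0 := by simp
  have degree_eq : (X * (1 - X) ^ 2 : ℝ[X]).degree = 3 := by
    rw [← neg_sub X, neg_sq]
    compute_degree!
  have mem := sub_eval_zero_smul_mem hQ
  refine sub_eq_zero.1 (eq_zero_of_dvd_of_degree_lt (X_mul_one_sub_X_sq_dvd mem eval_zero)
    ((degree_lt mem eval_zero).trans_le ?_))
  rw [degree_eq]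
  exact_mod_cast Nat.le_of_lt_succ hN

lemma exists_eq_smul_add_mul (hQ : Q ∈ macWilliamsInvariants (4 + N)) :
    ∃ R ∈ macWilliamsInvariants N,
      Q = Q.eval 0 • (1 + X) ^ (4 + N) + X * (1 - X) ^ 2 * R := by
  obtain ⟨R, hR⟩ := X_mul_one_sub_X_sq_dvd (sub_eval_zero_smul_mem hQ) (by simp)
  have hne : (X * (1 - X) ^ 2 : ℝ[X]) ≠ 0 := by
    rw [← neg_sub X, neg_sq, ← C_1]
    exact mul_ne_zero X_ne_zero (pow_ne_zero 2 (X_sub_C_ne_zero 1))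
  exact ⟨R, of_mul_mem_left hne X_mul_one_sub_X_sq_mem (hR ▸ sub_eval_zero_smul_mem hQ),
    by rw [← hR]; ring⟩

theorem gleason (hQ : Q ∈ macWilliamsInvariants N) :
    ∃ c : ℕ → ℝ, Q = ∑ j ∈ range (N / 4 + 1),
      c j • ((1 + X) ^ (N - 4 * j) * (X * (1 - X) ^ 2) ^ j) := by
  induction N using Nat.strong_induction_on generalizing Q with
  | _ N ih =>
    obtain hN | ⟨M, rfl⟩ : N < 4 ∨ ∃ M, N = 4 + M :=
      (lt_or_ge N 4).imp_right Nat.exists_eq_add_of_le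
    · refine ⟨fun _ => Q.eval 0, ?_⟩
      simpa [Nat.div_eq_of_lt hN] using eq_smul_of_lt_four hN hQ
    · obtain ⟨R, hR, hQR⟩ := exists_eq_smul_add_mul hQ
      obtain ⟨c, hc⟩ := ih M (by lia) hR
      refine ⟨fun j => j.casesOn (Q.eval 0) c, ?_⟩
      rw [show (4 + M) / 4 = M / 4 + 1 by lia, sum_range_succ', add_comm]
      conv_lhs => rw [hQR, hc, mul_sum]
      congr 1
      · simp
      · refine sum_congr rfl fun j _ => ?_
        rw [show 4 + M - 4 * (j + 1) = M - 4 * j by lia, mul_smul_comm, mul_left_comm,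
          pow_succ' (X * _)]

end macWilliamsInvariants

end Gleason

section LagrangeInversion

open PowerSeries

variable {R : Type*} [CommRing R]

lemma coeff_pow_mul_derivative [IsAddTorsionFree R] (v : R⟦X⟧) (l : ℕ) :
    coeff l (v ^ l * d⁄dX R v) = coeff (l + 1) (v ^ (l + 1)) := by
  have h := coeff_derivative (v ^ (l + 1)) l
  rw [derivative_pow, Nat.add_sub_cancel, mul_assoc, ← nsmul_eq_mul, map_nsmul,
    mul_comm (coeff _ _), ← Nat.cast_succ, ← nsmul_eq_mul] at h
  exact nsmul_right_injective l.succ_ne_zero h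

/-- With `v = X / h`, this is the vanishing of the residue of `j h ^ (j - 1) h' / h ^ (k + 1)`,
which is the derivative of a Laurent series. -/
lemma coeff_derivative_pow_mul_eq_zero [IsAddTorsionFree R] {h v : R⟦X⟧} (hv : h * v = X) {j k : ℕ}
    (hjk : j ≤ k) : coeff k (d⁄dX R (h ^ j) * v ^ (k + 1)) = 0 := by
  obtain _ | i := j
  · simp
  obtain ⟨l, rfl⟩ := Nat.exists_eq_add_of_le hjk
  have derivative_hv : h * d⁄dX R v + v * d⁄dX R h = 1 := by
    simpa using congrArg (d⁄dX R) hv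
  have expand : d⁄dX R (h ^ (i + 1)) * v ^ (i + 1 + l + 1) =
      (i + 1) • (X ^ i * (v ^ (l + 1) - X * (v ^ l * d⁄dX R v))) := by
    rw [derivative_pow, Nat.add_sub_cancel, nsmul_eq_mul, ← hv]
    linear_combination (↑(i + 1) * h ^ i * v ^ (i + l + 1)) * derivative_hv
  rw [expand, map_nsmul, show i + 1 + l = (l + 1) + i by ring, coeff_X_pow_mul, map_sub,
    coeff_succ_X_mul, coeff_pow_mul_derivative, sub_self, smul_zero]

lemma coeff_derivative_X_pow_mul (k : ℕ) (G w : R⟦X⟧) :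
    coeff k (d⁄dX R (X ^ (k + 1) * G) * w) = (k + 1) * constantCoeff G * constantCoeff w := by
  have expand : d⁄dX R (X ^ (k + 1) * G) * w =
      X ^ k * ((((k + 1 : ℕ) : R⟦X⟧) * G + X * d⁄dX R G) * w) := by
    rw [Derivation.leibniz, derivative_pow, derivative_X]
    simp only [Nat.add_sub_cancel, smul_eq_mul]
    ring
  rw [expand, coeff_X_pow_mul', if_pos le_rfl, Nat.sub_self, coeff_zero_eq_constantCoeff]
  simp

end LagrangeInversion

section AlternatingSeries

open PowerSeries

variable {K : Type*} [Field K]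

lemma one_add_X_mul_inv : (1 + X : K⟦X⟧) * (1 + X)⁻¹ = 1 :=
  PowerSeries.mul_inv_cancel _ (by simp)

lemma one_sub_X_mul_inv : (1 - X : K⟦X⟧) * (1 - X)⁻¹ = 1 :=
  PowerSeries.mul_inv_cancel _ (by simp)

variable {R : Type*} [CommRing R] [PartialOrder R] [IsOrderedRing R]
  [PartialOrder K] [IsOrderedRing K]

/-- The multiplicative monoid of power series whose coefficients have signs `+, -, +, -, …`, where
zero coefficients are allowed anywhere. -/
def alternatingSeries (R : Type*) [CommRing R] [PartialOrder R] [IsOrderedRing R] :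
    Submonoid R⟦X⟧ where
  carrier := {F | ∀ i, 0 ≤ (-1) ^ i * coeff i F}
  one_mem' i := by
    rw [coeff_one]
    split_ifs with hi <;> simp [hi]
  mul_mem' hF hG i := by
    rw [coeff_mul, mul_sum]
    refine sum_nonneg fun ⟨a, b⟩ hab => ?_
    rw [← mem_antidiagonal.1 hab, pow_add, mul_mul_mul_comm]
    exact mul_nonneg (hF a) (hG b)

lemma mem_alternatingSeries_of_eq_one_add_mul {F H : R⟦X⟧} (hH : H ∈ alternatingSeries R)
    (hH0 : constantCoeff H = 0) (hF : F = 1 + H * F) : F ∈ alternatingSeries R := fun i => by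
  induction i using Nat.strong_induction_on with
  | _ i ih =>
    rw [hF, map_add, mul_add, coeff_mul, mul_sum]
    refine add_nonneg ((alternatingSeries R).one_mem i) (sum_nonneg fun ⟨a, b⟩ hab => ?_)
    rw [← mem_antidiagonal.1 hab, pow_add, mul_mul_mul_comm]
    obtain rfl | ha := Nat.eq_zero_or_pos a
    · simp [hH0]
    · exact mul_nonneg (hH a) (ih b (by have : a + b = i := mem_antidiagonal.1 hab; lia))

lemma neg_X_mem_alternatingSeries : (-X : R⟦X⟧) ∈ alternatingSeries R := fun i => by
  rw [map_neg, coeff_X]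
  split_ifs with hi <;> simp [hi]

lemma one_add_X_inv_mem_alternatingSeries : (1 + X : K⟦X⟧)⁻¹ ∈ alternatingSeries K :=
  mem_alternatingSeries_of_eq_one_add_mul neg_X_mem_alternatingSeries (by simp)
    (by linear_combination one_add_X_mul_inv (K := K))

lemma one_add_X_inv_mul_one_sub_X_inv_mem_alternatingSeries :
    ((1 + X)⁻¹ * (1 - X)⁻¹ : K⟦X⟧) ∈ alternatingSeries K :=
  mem_alternatingSeries_of_eq_one_add_mul (pow_mem neg_X_mem_alternatingSeries 2) (by simp) <| by
    linear_combination
      (1 - X) * (1 - X)⁻¹ * one_add_X_mul_inv (K := K) + one_sub_X_mul_inv (K := K)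

end AlternatingSeries

section ExtremalCoefficient

open PowerSeries

variable {k s : ℕ} {Q : Polynomial ℝ} {G : ℝ⟦X⟧}

lemma derivative_one_add_X_inv_pow {K : Type*} [Field K] (N : ℕ) :
    d⁄dX K ((1 + X)⁻¹ ^ N) = -(N • (1 + X)⁻¹ ^ (N + 1)) := by
  obtain _ | N := N
  · simp
  · rw [derivative_pow, derivative_inv', map_add, derivative_X, Derivation.map_one_eq_zero,
      Nat.add_sub_cancel, nsmul_eq_mul]
    ring

lemma macWilliamsInvariants.exists_mul_inv_pow_eq_sum (hQ : Q ∈ macWilliamsInvariants (4 * k)) :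
    ∃ c : ℕ → ℝ, (Q : ℝ⟦X⟧) * (1 + X)⁻¹ ^ (4 * k) =
      ∑ j ∈ range (k + 1), c j • (X * (1 - X) ^ 2 * (1 + X)⁻¹ ^ 4) ^ j := by
  obtain ⟨c, hc⟩ := macWilliamsInvariants.gleason hQ
  refine ⟨c, ?_⟩
  rw [Nat.mul_div_cancel_left k four_pos] at hc
  rw [hc, ← Polynomial.coeToPowerSeries.ringHom_apply, map_sum, sum_mul]
  refine sum_congr rfl fun j hj => ?_
  obtain ⟨l, rfl⟩ := Nat.exists_eq_add_of_le (mem_range_succ_iff.1 hj)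
  have cancel : (1 + X : ℝ⟦X⟧) ^ (4 * l) * (1 + X)⁻¹ ^ (4 * l) = 1 := by
    rw [← mul_pow, one_add_X_mul_inv, one_pow]
  rw [show 4 * (j + l) - 4 * j = 4 * l by lia, Polynomial.coeToPowerSeries.ringHom_apply,
    Polynomial.coe_smul, smul_mul_assoc]
  congr 1
  simp only [Polynomial.coe_mul, Polynomial.coe_pow, Polynomial.coe_add, Polynomial.coe_sub,
    Polynomial.coe_one, Polynomial.coe_X]
  rw [mul_pow _ ((1 + X)⁻¹ ^ 4), ← pow_mul]
  linear_combination (X * (1 - X) ^ 2) ^ j * (1 + X : ℝ⟦X⟧)⁻¹ ^ (4 * j) * cancel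

/-- Both sides compute the coefficient of `z ^ k` in `F' * v ^ (k + 1)`, where
`F = (1 + z) ^ s * Q / (1 + z) ^ (4 * k + s)` is a polynomial of degree `≤ k` in
`h = z * (1 - z) ^ 2 / (1 + z) ^ 4` and `v = z / h`: it vanishes, and it is the difference of the
contributions of the two summands of `(1 + z) ^ s * Q`. -/
theorem macWilliamsInvariants.succ_mul_constantCoeff (hQ : Q ∈ macWilliamsInvariants (4 * k))
    (hG : (1 + X) ^ s * (Q : ℝ⟦X⟧) = 1 + X ^ (k + 1) * G) :
    (k + 1) * constantCoeff G = (4 * k + s : ℕ) * coeff k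
      ((1 + X)⁻¹ ^ (4 * k + s + 1) * ((1 + X) ^ 4 * (1 - X)⁻¹ ^ 2) ^ (k + 1)) := by
  obtain ⟨c, hc⟩ := macWilliamsInvariants.exists_mul_inv_pow_eq_sum hQ
  let A : ℝ⟦X⟧ := (1 + X)⁻¹
  let v : ℝ⟦X⟧ := (1 + X) ^ 4 * (1 - X)⁻¹ ^ 2
  have h_mul_v : X * (1 - X) ^ 2 * A ^ 4 * v = X := by
    calc X * (1 - X) ^ 2 * A ^ 4 * v
        = X * ((1 - X) * (1 - X)⁻¹) ^ 2 * ((1 + X) * A) ^ 4 := by ring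
      _ = X := by rw [one_sub_X_mul_inv, one_add_X_mul_inv]; ring
  have cancel : (1 + X) ^ s * A ^ s = 1 := by rw [← mul_pow, one_add_X_mul_inv, one_pow]
  have eq_sum : A ^ (4 * k + s) + X ^ (k + 1) * (G * A ^ (4 * k + s)) =
      ∑ j ∈ range (k + 1), c j • (X * (1 - X) ^ 2 * A ^ 4) ^ j := by
    rw [← hc]
    linear_combination -A ^ (4 * k + s) * hG + (Q : ℝ⟦X⟧) * A ^ (4 * k) * cancel
  have sum_eq_zero : coeff k (d⁄dX ℝ (∑ j ∈ range (k + 1),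
      c j • (X * (1 - X) ^ 2 * A ^ 4) ^ j) * v ^ (k + 1)) = 0 := by
    rw [map_sum, sum_mul, map_sum]
    refine sum_eq_zero fun j hj => ?_
    rw [Derivation.map_smul, smul_mul_assoc, map_smul,
      coeff_derivative_pow_mul_eq_zero h_mul_v (mem_range_succ_iff.1 hj), smul_zero]
  have constantCoeff_G_mul : constantCoeff (G * A ^ (4 * k + s)) = constantCoeff G := by simp [A]
  have constantCoeff_v_pow : constantCoeff (v ^ (k + 1)) = 1 := by simp [v]
  rw [← eq_sum, map_add, add_mul, map_add, coeff_derivative_X_pow_mul,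
    derivative_one_add_X_inv_pow, neg_mul, smul_mul_assoc, map_neg, map_nsmul, nsmul_eq_mul,
    constantCoeff_G_mul, constantCoeff_v_pow] at sum_eq_zero
  linear_combination sum_eq_zero

theorem macWilliamsInvariants.neg_one_pow_mul_constantCoeff_nonneg
    (hQ : Q ∈ macWilliamsInvariants (4 * k))
    (hG : (1 + X) ^ s * (Q : ℝ⟦X⟧) = 1 + X ^ (k + 1) * G) (hks : 6 * (k + 1) ≤ 4 * k + s + 1) :
    0 ≤ (-1) ^ k * constantCoeff G := by
  obtain ⟨r, hr⟩ := Nat.exists_eq_add_of_le hks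
  have cancel : (1 + X : ℝ⟦X⟧) ^ (4 * (k + 1)) * (1 + X)⁻¹ ^ (4 * (k + 1)) = 1 := by
    rw [← mul_pow, one_add_X_mul_inv, one_pow]
  have eq_alternating : (1 + X : ℝ⟦X⟧)⁻¹ ^ (4 * k + s + 1) *
      ((1 + X) ^ 4 * (1 - X)⁻¹ ^ 2) ^ (k + 1) =
        ((1 + X)⁻¹ * (1 - X)⁻¹) ^ (2 * (k + 1)) * (1 + X)⁻¹ ^ r := by
    rw [hr, mul_pow _ ((1 - X)⁻¹ ^ 2), mul_pow, ← pow_mul, ← pow_mul]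
    linear_combination (1 + X : ℝ⟦X⟧)⁻¹ ^ (2 * (k + 1) + r) * (1 - X)⁻¹ ^ (2 * (k + 1)) * cancel
  have mem := (alternatingSeries ℝ).mul_mem
    (_root_.pow_mem one_add_X_inv_mul_one_sub_X_inv_mem_alternatingSeries (2 * (k + 1)))
    (_root_.pow_mem one_add_X_inv_mem_alternatingSeries r)
  rw [← eq_alternating] at mem
  have := mul_nonneg (Nat.cast_nonneg (4 * k + s)) (mem k)
  rw [mul_left_comm, ← succ_mul_constantCoeff hQ hG, mul_left_comm] at this
  exact nonneg_of_mul_nonneg_right this (by positivity)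

end ExtremalCoefficient

section ShadowBound

open Polynomial Filter Topology Asymptotics

variable {n : ℕ} {C : Submodule (ZMod 2) (Fin n → ZMod 2)}

open scoped Classical in
/-- The weight enumerator of an even code `C` in the variable `z = y ^ 2`, so that the coefficient
of `z ^ i` counts the codewords of weight `2 * i`. -/
noncomputable def halfWeightPolynomial (C : Submodule (ZMod 2) (Fin n → ZMod 2)) : ℝ[X] :=
  ∑ c : C, X ^ (wt (c : Fin n → ZMod 2) / 2)

open scoped Classical in
lemma eval_halfWeightPolynomial (C : Submodule (ZMod 2) (Fin n → ZMod 2)) (z : ℝ) :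
    (halfWeightPolynomial C).eval z = ∑ c : C, z ^ (wt (c : Fin n → ZMod 2) / 2) := by
  simp [halfWeightPolynomial, eval_finsetSum]

open scoped Classical in
lemma sum_weightMonomial_eq_eval (hC : (C : Set (Fin n → ZMod 2)) ⊆ dualSet C) {x : ℝ}
    (hx : x ≠ 0) (y : ℝ) : ∑ c : C, weightMonomial x y (c : Fin n → ZMod 2) =
      x ^ n * (halfWeightPolynomial C).eval ((y / x) ^ 2) := by
  rw [eval_halfWeightPolynomial, mul_sum]
  refine sum_congr rfl fun c _ => ?_
  rw [weightMonomial_eq_pow_mul hx, ← pow_mul, Nat.mul_div_cancel' (even_wt hC c.2).two_dvd]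

open scoped Classical in
lemma sum_halfWeightChar_mul_weightMonomial_eq_eval (hC : (C : Set (Fin n → ZMod 2)) ⊆ dualSet C)
    {x : ℝ} (hx : x ≠ 0) (y : ℝ) :
    ∑ c : C, halfWeightChar hC c * weightMonomial x y (c : Fin n → ZMod 2) =
      x ^ n * (halfWeightPolynomial C).eval (-(y / x) ^ 2) := by
  rw [eval_halfWeightPolynomial, mul_sum]
  refine sum_congr rfl fun c _ => ?_
  rw [halfWeightChar_apply, weightMonomial_eq_pow_mul hx, neg_pow (_ ^ 2), ← pow_mul,
    Nat.mul_div_cancel' (even_wt hC c.2).two_dvd]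
  ring

theorem IsSelfDual.halfWeightPolynomial_mem (hC : IsSelfDual C) :
    halfWeightPolynomial C ∈ macWilliamsInvariants (Module.finrank (ZMod 2) C) := fun t ht => by
  classical
  have card_eq : (Nat.card C : ℝ) = 2 ^ Module.finrank (ZMod 2) C := by
    rw [Module.natCard_eq_pow_finrank (K := ZMod 2), Nat.card_zmod]
    norm_cast
  have h := macWilliams C 1 t
  rw [← hC, sum_subtype _ (p := (· ∈ C)) (by simp), sum_weightMonomial_eq_eval hC.subset ht,
    sum_weightMonomial_eq_eval hC.subset one_ne_zero, card_eq] at h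
  rw [hC.two_mul_finrank]
  simpa using h

lemma isBigO_weightMonomial_sqrt {v : Fin n → ZMod 2} {s : ℕ} (hv : s ≤ wt v) :
    (fun z : ℝ => weightMonomial (1 + √(-z)) (1 - √(-z)) v) =O[𝓝[≠] (-1)]
      fun z => (z - (-1)) ^ s := by
  have isBigO_sqrt : (fun z : ℝ => 1 - √(-z)) =O[𝓝[≠] (-1)] fun z => z - (-1) := by
    have : DifferentiableAt ℝ (fun z : ℝ => √(-z)) (-1) := by fun_prop (disch := norm_num)
    simpa using this.isBigO_sub.neg_left.mono nhdsWithin_le_nhds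
  let g : ℝ → ℝ := fun z => (1 + √(-z)) ^ (n - wt v) * (1 - √(-z)) ^ (wt v - s)
  have g_tendsto : Tendsto g (𝓝[≠] (-1)) (𝓝 (g (-1))) :=
    (by fun_prop : Continuous g).continuousAt.mono_left nhdsWithin_le_nhds
  refine ((g_tendsto.isBigO_one ℝ).mul (isBigO_sqrt.pow s)).congr (fun z => ?_) (by simp)
  rw [mul_assoc, ← pow_add, Nat.sub_add_cancel hv, weightMonomial]

/-- The twisted MacWilliams identity expresses the enumerator at `z = -u ^ 2` through the weights
of shadow vectors, each of which contributes a multiple of `(1 - u) ^ s`. -/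
theorem IsSinglyEvenSelfDual.one_add_X_pow_dvd_halfWeightPolynomial
    (hC : IsSinglyEvenSelfDual C) {s : ℕ} (hs : ∀ v ∈ shadow C, s ≤ wt v) :
    (1 + X) ^ s ∣ halfWeightPolynomial C := by
  classical
  have identity (u : ℝ) : 2 ^ n * (halfWeightPolynomial C).eval (-u ^ 2) = Nat.card C *
      ∑ v with v ∈ twistedDual (halfWeightChar hC.1.subset),
        weightMonomial (1 + u) (1 - u) v := by
    rw [← macWilliams_twisted, show (1 + u) + (1 - u) = 2 by ring,
      sum_halfWeightChar_mul_weightMonomial_eq_eval _ two_ne_zero]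
    congr 3
    ring
  have isBigO_sum : (fun z : ℝ => ∑ v with v ∈ twistedDual (halfWeightChar hC.1.subset),
      weightMonomial (1 + √(-z)) (1 - √(-z)) v) =O[𝓝[≠] (-1)] fun z => (z - (-1)) ^ s :=
    IsBigO.fun_sum fun v hv => isBigO_weightMonomial_sqrt
      (hs v (twistedDual_halfWeightChar_subset_shadow hC (mem_filter.1 hv).2))
  rw [add_comm, ← sub_neg_eq_add, ← C_1, ← C_neg]
  refine X_sub_C_pow_dvd_of_isBigO
    ((isBigO_sum.const_mul_left (Nat.card C / 2 ^ n)).congr' ?_ .rfl)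
  filter_upwards [nhdsWithin_le_nhds (eventually_lt_nhds (show (-1 : ℝ) < 0 by norm_num))] with z hz
  rw [div_mul_eq_mul_div, ← identity, mul_div_cancel_left₀ _ (by positivity),
    Real.sq_sqrt (by linarith), neg_neg]

end ShadowBound

section LengthBound

open Polynomial

variable {n : ℕ} {C : Submodule (ZMod 2) (Fin n → ZMod 2)}

lemma minWtSet_le {S : Set (Fin n → ZMod 2)} {x : Fin n → ZMod 2} (hx : x ∈ S) (hx0 : x ≠ 0) :
    minWtSet S ≤ wt x :=
  Nat.sInf_le ⟨x, hx, hx0, rfl⟩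

lemma exists_wt_eq_minWt (hC : C ≠ ⊥) : ∃ x ∈ C, x ≠ 0 ∧ wt x = minWt C := by
  obtain ⟨x, hxC, hx0⟩ := C.ne_bot_iff.1 hC
  exact Nat.sInf_mem (s := {w | ∃ x ∈ (C : Set _), x ≠ 0 ∧ wt x = w}) ⟨wt x, x, hxC, hx0, rfl⟩

lemma minWt_pos (hC : C ≠ ⊥) : 0 < minWt C := by
  obtain ⟨x, -, hx0, hx⟩ := exists_wt_eq_minWt hC
  exact hx ▸ hammingNorm_pos_iff.2 hx0

lemma halfWeightPolynomial_eq_one_add (hC : C ≠ ⊥) :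
    ∃ G : ℝ[X], 0 < G.coeff 0 ∧ halfWeightPolynomial C = 1 + X ^ (minWt C / 2) * G := by
  classical
  refine ⟨∑ c ∈ univ.erase (0 : C), X ^ (wt (c : Fin n → ZMod 2) / 2 - minWt C / 2), ?_, ?_⟩
  · rw [finsetSum_coeff]
    obtain ⟨x, hxC, hx0, hx⟩ := exists_wt_eq_minWt hC
    refine sum_pos' (fun c _ => ?_) ⟨⟨x, hxC⟩, by simpa using hx0, by simp [hx]⟩
    rw [coeff_X_pow]
    split_ifs <;> simp
  · rw [halfWeightPolynomial, ← add_sum_erase _ _ (mem_univ 0), mul_sum]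
    congr 1
    · simp [wt]
    · refine sum_congr rfl fun c hc => ?_
      have : minWt C ≤ wt (c : Fin n → ZMod 2) := minWtSet_le c.2 (by simpa using hc)
      rw [← pow_add, Nat.add_sub_cancel' (Nat.div_le_div_right this)]

lemma IsSinglyEvenSelfDual.ne_bot (hC : IsSinglyEvenSelfDual C) : C ≠ ⊥ := by
  obtain ⟨x, hxC, hx⟩ := hC.2
  refine C.ne_bot_iff.2 ⟨x, hxC, ?_⟩
  rintro rfl
  simp [wt] at hx

lemma minWtSet_shadow_le {v : Fin n → ZMod 2} (hv : v ∈ _root_.shadow C) :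
    minWtSet (_root_.shadow C) ≤ wt v :=
  minWtSet_le hv fun h => hv.2 (h ▸ C.zero_mem)

lemma IsSExtremal.length_eq (hC : IsSExtremal C) {k : ℕ} (hk : minWt C = 2 * (k + 1)) :
    n = 2 * (minWtSet (_root_.shadow C) + 4 * k) := by
  have length_eq := hC.1.1.two_mul_finrank
  have s_extremal := hC.2
  lia

theorem IsSExtremal.halfWeightPolynomial_eq_mul (hC : IsSExtremal C) {k : ℕ}
    (hk : minWt C = 2 * (k + 1)) : ∃ Q ∈ macWilliamsInvariants (4 * k),
      halfWeightPolynomial C = (1 + X) ^ minWtSet (_root_.shadow C) * Q := by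
  obtain ⟨Q, hQ⟩ := hC.1.one_add_X_pow_dvd_halfWeightPolynomial fun _ =>
    minWtSet_shadow_le
  have finrank_eq : Module.finrank (ZMod 2) C = minWtSet (_root_.shadow C) + 4 * k := by
    have := hC.1.1.two_mul_finrank.trans (hC.length_eq hk)
    lia
  have mem := hC.1.1.halfWeightPolynomial_mem
  rw [hQ, finrank_eq] at mem
  have ne_zero : ((1 + X) ^ minWtSet (_root_.shadow C) : ℝ[X]) ≠ 0 := by
    rw [add_comm, ← C_1]
    exact pow_ne_zero _ (X_add_C_ne_zero 1)
  exact ⟨Q, macWilliamsInvariants.of_mul_mem_left ne_zero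
    (macWilliamsInvariants.one_add_X_pow_mem _) mem, hQ⟩

theorem IsSExtremal.length_le (hC : IsSExtremal C) (hd : 4 ∣ minWt C) :
    n ≤ 6 * minWt C - 4 := by
  by_contra! n_gt
  obtain ⟨k, hk_odd, hk⟩ : ∃ k, Odd k ∧ minWt C = 2 * (k + 1) := by
    obtain ⟨e, he⟩ := hd
    have := minWt_pos hC.1.ne_bot
    exact ⟨2 * (e - 1) + 1, odd_two_mul_add_one _, by lia⟩
  obtain ⟨Q, hQ, hPQ⟩ := hC.halfWeightPolynomial_eq_mul hk
  obtain ⟨G, G_pos, hPG⟩ := halfWeightPolynomial_eq_one_add hC.1.ne_bot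
  rw [hPQ, hk, Nat.mul_div_cancel_left _ two_pos] at hPG
  have expansion := congrArg (fun p : ℝ[X] => (p : PowerSeries ℝ)) hPG
  simp only [Polynomial.coe_mul, Polynomial.coe_add, Polynomial.coe_pow, Polynomial.coe_one,
    Polynomial.coe_X] at expansion
  have G_nonpos := macWilliamsInvariants.neg_one_pow_mul_constantCoeff_nonneg hQ expansion
    (by have := hC.length_eq hk; lia)
  rw [hk_odd.neg_one_pow, ← PowerSeries.coeff_zero_eq_constantCoeff_apply, coeff_coe] at G_nonpos
  linarith

end LengthBound

/-- If there exists an s-extremal singly even self-dual `[n, n/2, d]` code with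
`d ≡ 0 (mod 4)`, then `n ≤ 6d - 4`; in particular, if there exists an s-extremal singly
even self-dual code of length `n` with minimum weight `8`, then `n ≤ 44`. -/
theorem sExtremal_length_bound_div4 :
    (∀ n d : ℕ, 4 ∣ d →
      (∃ C : Submodule (ZMod 2) (Fin n → ZMod 2),
        IsSExtremal C ∧ Module.finrank (ZMod 2) C = n / 2 ∧ minWt C = d) →
      n ≤ 6 * d - 4) ∧
    (∀ n : ℕ,
      (∃ C : Submodule (ZMod 2) (Fin n → ZMod 2), IsSExtremal C ∧ minWt C = 8) →
      n ≤ 44) := by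
  refine ⟨?_, ?_⟩
  · rintro n _ hd ⟨C, hC, -, rfl⟩
    exact hC.length_le hd
  · rintro n ⟨C, hC, hd⟩
    simpa [hd] using hC.length_le (by norm_num [hd])
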